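/- Let R be a rules mapping, Υ an extended distribution, n ≥ 1, and T ∈ ℝ^r with n·T ∈ ℕ^r and Σ_{i∈𝒳} T_i = 1; assume Υ_i > 0 whenever T_i > 0. Then Σ_{ā ∈ 𝒳^n, 𝒯(ā) = T} P_{R,Υ}(ā) ≤ exp(−n · D_e(T‖Υ)). -/

import Mathlib

/-! The proof is a change of measure. Let `V` be the conditional distribution of `T` on each group,
`V_{j,i} = T_{j,i} / λ_j`. On a word of type `T`, the weights given by `Υ` and by `V` differ by the
factor `∏_a (Υ_a / V_a)^{n T_a}`, which depends on the type only and equals `exp (-n D_e(T‖Υ))`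
(`wordP_eq_mul`, `exp_tilt_prod`). The total `V`-weight of all words of length `n` is at most one,
by induction on `n` (`sum_wordP_le_one`); this needs only that every group has `V`-mass at most one,
so groups with `λ_j = 0`, where the quotient `V` is identically zero, cause no trouble. -/

open scoped Classical

noncomputable section

namespace RB

/-- The alphabet `𝒳`, given as the disjoint union of the groups `𝒳_j`. -/
abbrev X (N : ℕ) (r : Fin N → ℕ) : Type := (j : Fin N) × Fin (r j)

variable {N : ℕ} {r : Fin N → ℕ}

/-- `P_{R,Υ}(ā) = ∏_ℓ [Υ_{a_ℓ}` if `a_ℓ ∈ 𝒳_{R(a_1,…,a_{ℓ-1})}`, else `0]` -/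
def wordP (R : List (X N r) → Fin N) (Υ : (j : Fin N) → Fin (r j) → ℝ)
    (l : List (X N r)) : ℝ :=
  ∏ ℓ : Fin l.length,
    if (l.get ℓ).1 = R (l.take ℓ.1) then Υ (l.get ℓ).1 (l.get ℓ).2 else 0

/-- the type `𝒯(ā)` of a word: `𝒯(ā)_a` is the frequency of the letter `a` -/
def typeOf (l : List (X N r)) (a : X N r) : ℝ := (l.count a : ℝ) / (l.length : ℝ)

/-- the extended Kullback-Leibler divergence
`D_e(T‖Υ) = Σ_i T_i log(T_i/Υ_i) - Σ_j λ_j log λ_j` with `λ_j = Σ_{i ∈ 𝒳_j} T_i`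
(the convention `0 · log 0 = 0` holds automatically since `Real.log 0 = 0`). -/
def De (T : X N r → ℝ) (Υ : (j : Fin N) → Fin (r j) → ℝ) : ℝ :=
  (∑ a : X N r, T a * Real.log (T a / Υ a.1 a.2))
    - ∑ j : Fin N, (∑ i, T ⟨j, i⟩) * Real.log (∑ i, T ⟨j, i⟩)

end RB

namespace RB

variable {N : ℕ} {r : Fin N → ℕ}

lemma wordP_nonneg (R : List (X N r) → Fin N) (V : (j : Fin N) → Fin (r j) → ℝ)
    (hV0 : ∀ j i, 0 ≤ V j i) (l : List (X N r)) : 0 ≤ wordP R V l := by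
  unfold wordP
  refine Finset.prod_nonneg fun ℓ _ => ?_
  split_ifs
  · exact hV0 _ _
  · exact le_rfl

/-- After a first letter `a`, the rest of the word is governed by the shifted rules
`w ↦ R (a :: w)`. -/
lemma wordP_cons (R : List (X N r) → Fin N) (V : (j : Fin N) → Fin (r j) → ℝ)
    (a : X N r) (l : List (X N r)) :
    wordP R V (a :: l) =
      (if a.1 = R [] then V a.1 a.2 else 0) * wordP (fun w => R (a :: w)) V l := by
  unfold wordP
  exact Fin.prod_univ_succ (n := l.length) _

lemma sum_wordP_ofFn_le_one (V : (j : Fin N) → Fin (r j) → ℝ)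
    (hV0 : ∀ j i, 0 ≤ V j i) (hV1 : ∀ j, ∑ i, V j i ≤ 1) (n : ℕ) :
    ∀ R : List (X N r) → Fin N, ∑ f : Fin n → X N r, wordP R V (List.ofFn f) ≤ 1 := by
  induction n with
  | zero =>
    intro R
    have h0 : wordP R V [] = 1 := Fin.prod_univ_zero _
    simp [h0]
  | succ n ih =>
    intro R
    rw [← (Fin.consEquiv fun _ : Fin (n + 1) => X N r).sum_comp, Fintype.sum_prod_type]
    have h1 : ∀ a : X N r, ∑ f : Fin n → X N r,
        wordP R V (List.ofFn ((Fin.consEquiv fun _ : Fin (n + 1) => X N r) (a, f)))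
        ≤ if a.1 = R [] then V a.1 a.2 else 0 := by
      intro a
      have h2 : ∀ f : Fin n → X N r,
          wordP R V (List.ofFn ((Fin.consEquiv fun _ : Fin (n + 1) => X N r) (a, f)))
          = (if a.1 = R [] then V a.1 a.2 else 0)
            * wordP (fun w => R (a :: w)) V (List.ofFn f) := by
        intro f
        rw [← wordP_cons, List.ofFn_succ]
        simp [Fin.consEquiv]
      simp_rw [h2]
      rw [← Finset.mul_sum]
      refine mul_le_of_le_one_right ?_ (ih _)
      split_ifs
      · exact hV0 _ _
      · exact le_rfl
    refine (Finset.sum_le_sum fun a _ => h1 a).trans ?_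
    rw [Fintype.sum_sigma]
    -- only the group `R []` contributes
    rw [Finset.sum_eq_single (R [])]
    · simpa using hV1 (R [])
    · intro j _ hj
      simp [hj]
    · simp

lemma sum_wordP_le_one (R : List (X N r) → Fin N) (V : (j : Fin N) → Fin (r j) → ℝ)
    (hV0 : ∀ j i, 0 ≤ V j i) (hV1 : ∀ j, ∑ i, V j i ≤ 1) (n : ℕ)
    (S : Finset (List (X N r))) (hS : ∀ l ∈ S, l.length = n) :
    ∑ l ∈ S, wordP R V l ≤ 1 := by
  have hsub : S ⊆ Finset.univ.image (fun f : Fin n → X N r => List.ofFn f) := by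
    intro l hl
    obtain rfl := hS l hl
    exact Finset.mem_image.2 ⟨l.get, Finset.mem_univ _, List.ofFn_get l⟩
  refine (Finset.sum_le_sum_of_subset_of_nonneg hsub
    fun l _ _ => wordP_nonneg R V hV0 l).trans ?_
  rw [Finset.sum_image fun f _ g _ h => List.ofFn_injective h]
  exact sum_wordP_ofFn_le_one V hV0 hV1 n R

/-- If `w` is the density of `Υ` with respect to `V` on the letters of `l`, then the two weights of
`l` differ by the product of the values of `w` along `l`. -/
lemma wordP_eq_mul (R : List (X N r) → Fin N) (Υ V : (j : Fin N) → Fin (r j) → ℝ)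
    (w : X N r → ℝ) (l : List (X N r)) (h : ∀ a ∈ l, Υ a.1 a.2 = w a * V a.1 a.2) :
    wordP R Υ l = (∏ a : X N r, w a ^ l.count a) * wordP R V l := by
  have h1 : ∏ a : X N r, w a ^ l.count a = ∏ ℓ : Fin l.length, w (l.get ℓ) := by
    have h2 : ∏ ℓ : Fin l.length, w (l.get ℓ) = (l.map w).prod := Fin.prod_univ_fun_getElem l w
    rw [h2, Finset.prod_list_map_count]
    refine (Finset.prod_subset (Finset.subset_univ _) fun a _ ha => ?_).symm
    rw [List.count_eq_zero_of_not_mem (by simpa using ha), pow_zero]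
  rw [h1]
  unfold wordP
  rw [← Finset.prod_mul_distrib]
  refine Finset.prod_congr rfl fun ℓ _ => ?_
  split_ifs
  · exact h _ (List.get_mem _ _)
  · simp

/-- The density `Υ_a / V_a = λ_j Υ_a / T_a` in exponential form, multiplied along a word in which
`a` occurs `n T_a` times, gives `exp (-n D_e(T‖Υ))`. -/
lemma exp_tilt_prod (T : X N r → ℝ) (Υ : (j : Fin N) → Fin (r j) → ℝ) (n : ℕ)
    (c : X N r → ℕ) (hc : ∀ a, (c a : ℝ) = n * T a) :
    ∏ a : X N r, Real.exp (Real.log (∑ i, T ⟨a.1, i⟩) - Real.log (T a / Υ a.1 a.2)) ^ c a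
      = Real.exp (-(n : ℝ) * De T Υ) := by
  simp_rw [← Real.exp_nat_mul]
  rw [← Real.exp_sum]
  congr 1
  have h : ∑ j : Fin N, (∑ i, T ⟨j, i⟩) * Real.log (∑ i, T ⟨j, i⟩)
      = ∑ a : X N r, T a * Real.log (∑ i, T ⟨a.1, i⟩) := by
    rw [Fintype.sum_sigma]
    simp_rw [Finset.sum_mul]
  unfold De
  rw [h, ← Finset.sum_sub_distrib, Finset.mul_sum]
  refine Finset.sum_congr rfl fun a _ => ?_
  rw [hc]
  ring

end RB

/-- Lemma 3(3): for any type `T` of length-`n` words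
(`n·T ∈ ℕ^r`, `Σ T = 1`) with `Υ_i > 0` whenever `T_i > 0`,
`Σ_{ā ∈ 𝒳ⁿ, 𝒯(ā) = T} P_{R,Υ}(ā) ≤ exp(-n·D_e(T‖Υ))`.
(The set of such words is finite, so the `tsum` is the finite sum.) -/
theorem stmt_5
    (N : ℕ) (hN : 1 ≤ N) (r : Fin N → ℕ) (hr : ∀ j, 1 ≤ r j)
    (R : List (RB.X N r) → Fin N)
    (Υ : (j : Fin N) → Fin (r j) → ℝ)
    (hΥ0 : ∀ j i, 0 ≤ Υ j i) (hΥ1 : ∀ j, ∑ i, Υ j i = 1)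
    (n : ℕ) (hn : 1 ≤ n)
    (T : RB.X N r → ℝ)
    (hTnat : ∀ a, ∃ m : ℕ, (n : ℝ) * T a = (m : ℝ))
    (hTsum : ∑ a, T a = 1)
    (hTΥ : ∀ a : RB.X N r, 0 < T a → 0 < Υ a.1 a.2) :
    (∑' l : {l : List (RB.X N r) | l.length = n ∧ ∀ a, RB.typeOf l a = T a},
        RB.wordP R Υ l.1) ≤ Real.exp (-(n : ℝ) * RB.De T Υ) := by
  have hn0 : (0 : ℝ) < n := by exact_mod_cast hn
  have hT0 : ∀ a, 0 ≤ T a := by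
    intro a
    obtain ⟨m, hm⟩ := hTnat a
    have : 0 ≤ (n : ℝ) * T a := hm ▸ Nat.cast_nonneg m
    exact nonneg_of_mul_nonneg_right this hn0
  have hL0 : ∀ j, 0 ≤ ∑ i, T ⟨j, i⟩ := fun j => Finset.sum_nonneg fun i _ => hT0 _
  let V : (j : Fin N) → Fin (r j) → ℝ := fun j i => T ⟨j, i⟩ / ∑ i', T ⟨j, i'⟩
  have hV0 : ∀ j i, 0 ≤ V j i := fun j i => div_nonneg (hT0 _) (hL0 j)
  have hV1 : ∀ j, ∑ i, V j i ≤ 1 := by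
    intro j
    simp only [V]
    rw [← Finset.sum_div]
    exact div_self_le_one _
  have key : ∀ l : List (RB.X N r), l.length = n → (∀ a, RB.typeOf l a = T a) →
      RB.wordP R Υ l = Real.exp (-(n : ℝ) * RB.De T Υ) * RB.wordP R V l := by
    intro l hl hlT
    have hc : ∀ a, (l.count a : ℝ) = n * T a := by
      intro a
      rw [← hlT a, RB.typeOf, hl]
      field_simp
    rw [← RB.exp_tilt_prod T Υ n (fun a => l.count a) hc]
    refine RB.wordP_eq_mul R Υ V _ l fun a ha => ?_
    -- a letter that occurs in `l` has positive frequency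
    have hTa : 0 < T a := by
      have h1 : (0 : ℝ) < l.count a := by exact_mod_cast List.count_pos_iff.2 ha
      rw [hc] at h1
      exact pos_of_mul_pos_right h1 hn0.le
    have hΥa := hTΥ a hTa
    have hLa : 0 < ∑ i, T ⟨a.1, i⟩ :=
      hTa.trans_le (Finset.single_le_sum (f := fun i => T ⟨a.1, i⟩)
        (fun i _ => hT0 _) (Finset.mem_univ a.2))
    rw [Real.exp_sub, Real.exp_log hLa, Real.exp_log (div_pos hTa hΥa)]
    change _ = _ * (T a / _)
    field_simp
  refine tsum_le_of_sum_le' (Real.exp_nonneg _) fun s => ?_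
  rw [Finset.sum_congr rfl fun l _ => key l.1 l.2.1 l.2.2, ← Finset.mul_sum]
  refine mul_le_of_le_one_right (Real.exp_nonneg _) ?_
  have := RB.sum_wordP_le_one R V hV0 hV1 n (s.map (Function.Embedding.subtype _)) (by
    intro l hl
    obtain ⟨x, _, rfl⟩ := Finset.mem_map.1 hl
    exact x.2.1)
  rwa [Finset.sum_map] at this
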